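/- arXiv:0902.3311 — 2 statements merged into one kernel-verified Lean document; each statement's English description precedes it below -/
import Mathlib

section
/- Let d ≥ 1, 1 ≤ p < ∞, 1 ≤ r < ∞ and s > d/r. Set s' = s − (d/r − d/p)₊, where x₊ = max(x,0). Then for every ε > 0, the set { c ∈ b^{s,∞}_r : c ∈ b^{s'+ε,∞}_p } is a Haar-null subset of b^{s,∞}_r. -/
/-!
The set `S = b^{s,∞}_r ∩ b^{s'+ε,∞}_p` is a linear subspace (Minkowski, as `p ≥ 1`), and it is
Borel, being a countable union over the bound of sets closed for the coordinatewise topology. It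
is a proper subspace: `exists_saturating` gives `g ∈ b^{s,∞}_r` outside it, namely one spike per
level if `r ≤ p`, and constant levels if `p ≤ r`. The probe is the law of `t • g` with `t` uniform
on `[0,1]`, which lives on a compact segment. A translate of `S` meets the line `ℝ g` in at most
one point, since two such points would differ by a nonzero multiple of `g` lying in `S`; so every
translate is null.
-/


open MeasureTheory
open scoped ENNReal BigOperators

/-- The space of wavelet-type coefficient sequences `c = (c_{j,k})`, `j ∈ ℕ`,
`k ∈ {0,…,2^j−1}^d`. -/
abbrev BSeq (d : ℕ) := (j : ℕ) → (Fin d → Fin (2 ^ j)) → ℝ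

/-- The `j`-th term `2^{(s−d/r+d/2)j} (Σ_k |c_{j,k}|^r)^{1/r}` of the Besov quasi-norm. -/
noncomputable def besovNormAt (d : ℕ) (s r : ℝ) (c : BSeq d) (j : ℕ) : ℝ :=
  (2 : ℝ) ^ ((s - (d : ℝ) / r + (d : ℝ) / 2) * (j : ℝ)) *
    (∑ k : Fin d → Fin (2 ^ j), |c j k| ^ r) ^ (1 / r)

/-- Membership in the Besov sequence space `b^{s,∞}_r`:
`sup_j 2^{(s−d/r+d/2)j} (Σ_k |c_{j,k}|^r)^{1/r} < ∞`. -/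
def MemBesov (d : ℕ) (s r : ℝ) (c : BSeq d) : Prop :=
  ∃ C : ℝ, ∀ j : ℕ, besovNormAt d s r c j ≤ C

/-- The weak Besov quasi-norm
`‖c‖_{W(w,p)} = sup_{λ>0} λ^w Σ_{j≥0} 2^{j(dp/2−d)} #{k : |c_{j,k}| > λ}`, valued in `[0,∞]`. -/
noncomputable def wBesovNorm (d : ℕ) (w p : ℝ) (c : BSeq d) : ℝ≥0∞ :=
  ⨆ lam : Set.Ioi (0 : ℝ),
    ENNReal.ofReal ((lam : ℝ) ^ w) *
      ∑' j : ℕ, ENNReal.ofReal ((2 : ℝ) ^ (((d : ℝ) * p / 2 - (d : ℝ)) * (j : ℝ))) *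
        (Nat.card {k : Fin d → Fin (2 ^ j) // (lam : ℝ) < |c j k|} : ℝ≥0∞)

/-- Membership in the weak Besov sequence space `W(w,p)`. -/
def MemWBesov (d : ℕ) (w p : ℝ) (c : BSeq d) : Prop :=
  wBesovNorm d w p c ≠ ⊤

/-- The Besov sequence space `b^{s,∞}_r` as a type. -/
def BesovSp (d : ℕ) (s r : ℝ) := {c : BSeq d // MemBesov d s r c}

/-- The extended distance on sequences associated with the Besov quasi-norm. -/
noncomputable def besovEDist (d : ℕ) (s r : ℝ) (c c' : BSeq d) : ℝ≥0∞ :=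
  ⨆ j : ℕ, ENNReal.ofReal (besovNormAt d s r (c - c') j)

/-- A set `S ⊆ b^{s,∞}_r` is Haar-null (relative to a topology `τ` on `b^{s,∞}_r`) if it is
contained in a Borel set `A` carrying a compactly supported Borel probability measure `μ`
all of whose translates of `A` are null. -/
def IsHaarNullBesov (d : ℕ) (s r : ℝ) (τ : TopologicalSpace (BesovSp d s r))
    (S : Set (BesovSp d s r)) : Prop :=
  ∃ A : Set (BesovSp d s r), S ⊆ A ∧ MeasurableSet[@borel _ τ] A ∧
    ∃ μ : @Measure (BesovSp d s r) (@borel _ τ),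
      @IsProbabilityMeasure _ (@borel _ τ) μ ∧
      (∃ K : Set (BesovSp d s r), @IsCompact _ τ K ∧ μ Kᶜ = 0) ∧
      ∀ x : BesovSp d s r, μ {y : BesovSp d s r | ∃ a ∈ A, y.1 = x.1 + a.1} = 0

/-- `τ` is the quasi-norm topology of `b^{s,∞}_r`: around every point, the balls of
`besovEDist` form a basis of neighbourhoods. -/
def IsBesovTopology (d : ℕ) (s r : ℝ) (τ : TopologicalSpace (BesovSp d s r)) : Prop :=
  ∀ x : BesovSp d s r, (@nhds _ τ x).HasBasis (fun ε : ℝ≥0∞ => 0 < ε)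
    (fun ε => {y : BesovSp d s r | besovEDist d s r x.1 y.1 < ε})

/-- The minimax exponent `α̃`. -/
noncomputable def alphaTilde (d : ℕ) (s r p : ℝ) : ℝ :=
  if p * (d : ℝ) / (2 * s + (d : ℝ)) < r then 2 * s / (2 * s + (d : ℝ))
  else 2 * (s - (d : ℝ) / r + (d : ℝ) / p) / (2 * (s - (d : ℝ) / r) + (d : ℝ))

/-- The irreducibility index `J(j,k)`: the smallest `J` such that `k = 2^{j−J} K` for some
`K ∈ {0,…,2^J−1}^d`, i.e. the smallest `J` with `2^{j−J} ∣ k_i` for all `i`. -/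
def irredIndex (d : ℕ) (j : ℕ) (k : Fin d → Fin (2 ^ j)) : ℕ :=
  Nat.find (p := fun J : ℕ => ∀ i : Fin d, 2 ^ (j - J) ∣ (k i : ℕ)) ⟨j, fun i => by simp⟩

/-- The saturating sequence `g`, with `g_{j,k} = j^{−(1+3/r)} 2^{−(s−d/r+d/2)j} 2^{−(d/r)J(j,k)}`
for `j ≥ 1` and `g_{0,k} = 0`. -/
noncomputable def gSeq (d : ℕ) (s r : ℝ) : BSeq d := fun j k =>
  if j = 0 then 0
  else (j : ℝ) ^ (-(1 + 3 / r)) * (2 : ℝ) ^ (-(s - (d : ℝ) / r + (d : ℝ) / 2) * (j : ℝ)) *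
    (2 : ℝ) ^ (-((d : ℝ) / r) * (irredIndex d j k : ℝ))

/-- Positive homogeneity of the `j`-th term of the Besov norm. -/
lemma besovNormAt_smul {d : ℕ} {s r : ℝ} (hr : 1 ≤ r) (a : ℝ) (c : BSeq d) (j : ℕ) :
    besovNormAt d s r (a • c) j = |a| * besovNormAt d s r c j := by
  have h0 : (0 : ℝ) ≤ ∑ k : Fin d → Fin (2 ^ j), |c j k| ^ r :=
    Finset.sum_nonneg fun k _ => Real.rpow_nonneg (abs_nonneg _) _
  have h : ∑ k : Fin d → Fin (2 ^ j), |(a • c) j k| ^ r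
      = |a| ^ r * ∑ k : Fin d → Fin (2 ^ j), |c j k| ^ r := by
    rw [Finset.mul_sum]
    refine Finset.sum_congr rfl fun k _ => ?_
    rw [Pi.smul_apply, Pi.smul_apply, smul_eq_mul, abs_mul,
      Real.mul_rpow (abs_nonneg _) (abs_nonneg _)]
  unfold besovNormAt
  rw [h, Real.mul_rpow (Real.rpow_nonneg (abs_nonneg _) _) h0, ← Real.rpow_mul (abs_nonneg _),
    mul_one_div_cancel (by linarith), Real.rpow_one]
  ring

lemma besovNormAt_add_le {d : ℕ} {s r : ℝ} (hr : 1 ≤ r) (c c' : BSeq d) (j : ℕ) :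
    besovNormAt d s r (c + c') j ≤ besovNormAt d s r c j + besovNormAt d s r c' j := by
  unfold besovNormAt
  rw [← mul_add]
  exact mul_le_mul_of_nonneg_left (Real.Lp_add_le Finset.univ (c j) (c' j) hr) (by positivity)

lemma MemBesov.smul {d : ℕ} {s r : ℝ} (hr : 1 ≤ r) {c : BSeq d} (h : MemBesov d s r c) (a : ℝ) :
    MemBesov d s r (a • c) := by
  obtain ⟨C, hC⟩ := h
  refine ⟨|a| * C, fun j => ?_⟩
  rw [besovNormAt_smul hr]
  exact mul_le_mul_of_nonneg_left (hC j) (abs_nonneg _)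

lemma MemBesov.add {d : ℕ} {s r : ℝ} (hr : 1 ≤ r) {c c' : BSeq d} (h : MemBesov d s r c)
    (h' : MemBesov d s r c') : MemBesov d s r (c + c') := by
  obtain ⟨C, hC⟩ := h
  obtain ⟨D, hD⟩ := h'
  exact ⟨C + D, fun j => (besovNormAt_add_le hr c c' j).trans (add_le_add (hC j) (hD j))⟩

/-- Each coefficient is controlled by the term of the Besov norm at its level. -/
lemma abs_le_besovNormAt {d : ℕ} {s r : ℝ} (hr : 1 ≤ r) (c : BSeq d) (j : ℕ)
    (k : Fin d → Fin (2 ^ j)) :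
    (2 : ℝ) ^ ((s - (d : ℝ) / r + (d : ℝ) / 2) * (j : ℝ)) * |c j k| ≤ besovNormAt d s r c j := by
  unfold besovNormAt
  refine mul_le_mul_of_nonneg_left ?_ (by positivity)
  have h1 : |c j k| ^ r ≤ ∑ k : Fin d → Fin (2 ^ j), |c j k| ^ r :=
    Finset.single_le_sum (f := fun k => |c j k| ^ r)
      (fun k _ => Real.rpow_nonneg (abs_nonneg _) _) (Finset.mem_univ k)
  calc |c j k| = (|c j k| ^ r) ^ (1 / r) := by
        rw [← Real.rpow_mul (abs_nonneg _), mul_one_div_cancel (by linarith), Real.rpow_one]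
    _ ≤ _ := Real.rpow_le_rpow (Real.rpow_nonneg (abs_nonneg _) _) h1 (by positivity)

lemma continuous_coord {d : ℕ} {s r : ℝ} (hr : 1 ≤ r) [τ : TopologicalSpace (BesovSp d s r)]
    (hτ : IsBesovTopology d s r τ) (j : ℕ) (k : Fin d → Fin (2 ^ j)) :
    Continuous fun y : BesovSp d s r => y.1 j k := by
  rw [continuous_iff_continuousAt]
  intro x
  refine ((hτ x).tendsto_iff Metric.nhds_basis_ball).2 fun δ hδ => ?_
  have hw : (0 : ℝ) < (2 : ℝ) ^ ((s - (d : ℝ) / r + (d : ℝ) / 2) * (j : ℝ)) := by positivity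
  refine ⟨ENNReal.ofReal ((2 : ℝ) ^ ((s - (d : ℝ) / r + (d : ℝ) / 2) * (j : ℝ)) * δ),
    ENNReal.ofReal_pos.2 (mul_pos hw hδ), fun y hy => ?_⟩
  have h1 : ENNReal.ofReal (besovNormAt d s r (x.1 - y.1) j) < _ :=
    (le_iSup (fun j => ENNReal.ofReal (besovNormAt d s r (x.1 - y.1) j)) j).trans_lt hy
  have h2 := (ENNReal.ofReal_lt_ofReal_iff (mul_pos hw hδ)).1 h1
  have h3 := lt_of_mul_lt_mul_left ((abs_le_besovNormAt hr (x.1 - y.1) j k).trans_lt h2) hw.le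
  rw [Metric.mem_ball, dist_comm, Real.dist_eq]
  exact h3

lemma continuous_val {d : ℕ} {s r : ℝ} (hr : 1 ≤ r) [τ : TopologicalSpace (BesovSp d s r)]
    (hτ : IsBesovTopology d s r τ) : Continuous fun y : BesovSp d s r => y.1 :=
  continuous_pi fun j => continuous_pi fun k => continuous_coord hr hτ j k

/-- The terms of a Besov norm are continuous for the product topology on sequences. -/
lemma continuous_besovNormAt {d : ℕ} {s p : ℝ} (hp : 1 ≤ p) (j : ℕ) :
    Continuous fun c : BSeq d => besovNormAt d s p c j := by
  unfold besovNormAt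
  refine continuous_const.mul (Continuous.rpow_const ?_ fun _ => Or.inr (by positivity))
  refine continuous_finsetSum _ fun k _ => Continuous.rpow_const ?_ fun _ => Or.inr (by positivity)
  fun_prop

/-- The line `t ↦ t • g` in `b^{s,∞}_r`. -/
def besovLine {d : ℕ} {s r : ℝ} (hr : 1 ≤ r) (g : BSeq d) (hg : MemBesov d s r g) (t : ℝ) :
    BesovSp d s r := ⟨t • g, hg.smul hr t⟩

lemma continuous_line {d : ℕ} {s r : ℝ} (hr : 1 ≤ r) [τ : TopologicalSpace (BesovSp d s r)]
    (hτ : IsBesovTopology d s r τ) (g : BSeq d) (hg : MemBesov d s r g) :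
    Continuous (besovLine hr g hg) := by
  obtain ⟨C, hC⟩ := id hg
  rw [continuous_iff_continuousAt]
  intro t₀
  refine (hτ _).tendsto_right_iff.2 fun δ hδ => ?_
  have hlim : Filter.Tendsto (fun t : ℝ => ENNReal.ofReal (|t₀ - t| * C)) (nhds t₀) (nhds 0) := by
    have : Continuous fun t : ℝ => ENNReal.ofReal (|t₀ - t| * C) :=
      ENNReal.continuous_ofReal.comp (by fun_prop)
    simpa using this.tendsto t₀
  filter_upwards [hlim.eventually_lt_const hδ] with t ht
  refine lt_of_le_of_lt (iSup_le fun j => ENNReal.ofReal_le_ofReal ?_) ht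
  change besovNormAt d s r (t₀ • g - t • g) j ≤ _
  rw [← sub_smul, besovNormAt_smul hr]
  exact mul_le_mul_of_nonneg_left (hC j) (abs_nonneg _)

/-- The spike sequence, with a single coefficient `2^{-aj}` at level `j`, has the same `ℓ^q` norm
on each level for all `q`. -/
lemma besovNormAt_spike {d : ℕ} {s q a : ℝ} (hq : 1 ≤ q) (j : ℕ) :
    besovNormAt d s q (fun j k => if k = 0 then (2 : ℝ) ^ (-a * (j : ℝ)) else 0) j
      = (2 : ℝ) ^ ((s - (d : ℝ) / q + (d : ℝ) / 2 - a) * (j : ℝ)) := by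
  have h : ∑ k : Fin d → Fin (2 ^ j), |if k = 0 then (2 : ℝ) ^ (-a * (j : ℝ)) else 0| ^ q
      = ((2 : ℝ) ^ (-a * (j : ℝ))) ^ q := by
    rw [Finset.sum_eq_single 0]
    · rw [if_pos rfl, abs_of_pos (by positivity)]
    · intro k _ hk
      rw [if_neg hk, abs_zero, Real.zero_rpow (by linarith)]
    · simp
  unfold besovNormAt
  rw [h, ← Real.rpow_mul (by positivity), mul_one_div_cancel (by linarith), Real.rpow_one,
    ← Real.rpow_add two_pos]
  congr 1
  ring

/-- The sequence with constant value `2^{-aj}` on level `j`: its `ℓ^q` norm picks up the factor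
`2^{dj/q}` from the `2^{dj}` coefficients. -/
lemma besovNormAt_flat {d : ℕ} {s q a : ℝ} (hq : 1 ≤ q) (j : ℕ) :
    besovNormAt d s q (fun j _ => (2 : ℝ) ^ (-a * (j : ℝ))) j
      = (2 : ℝ) ^ ((s + (d : ℝ) / 2 - a) * (j : ℝ)) := by
  have hcard : ((Fintype.card (Fin d → Fin (2 ^ j)) : ℕ) : ℝ) = (2 : ℝ) ^ ((d : ℝ) * (j : ℝ)) := by
    rw [Fintype.card_fun, Fintype.card_fin, Fintype.card_fin, ← pow_mul, mul_comm j d]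
    push_cast
    rw [← Nat.cast_mul, Real.rpow_natCast]
  have h : ∑ _k : Fin d → Fin (2 ^ j), |(2 : ℝ) ^ (-a * (j : ℝ))| ^ q
      = (2 : ℝ) ^ ((d : ℝ) * (j : ℝ) + -a * (j : ℝ) * q) := by
    rw [Finset.sum_const, nsmul_eq_mul, Finset.card_univ, hcard, abs_of_pos (by positivity),
      ← Real.rpow_mul two_pos.le, ← Real.rpow_add two_pos]
  have hq0 : q ≠ 0 := by linarith
  unfold besovNormAt
  rw [h, ← Real.rpow_mul two_pos.le, ← Real.rpow_add two_pos]
  congr 1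
  field_simp
  ring

lemma not_bounded_two_rpow {ε : ℝ} (hε : 0 < ε) :
    ¬ ∃ C : ℝ, ∀ j : ℕ, (2 : ℝ) ^ (ε * (j : ℝ)) ≤ C := by
  rintro ⟨C, hC⟩
  obtain ⟨n, hn⟩ := pow_unbounded_of_one_lt C (Real.one_lt_rpow one_lt_two hε)
  rw [← Real.rpow_natCast, ← Real.rpow_mul two_pos.le] at hn
  exact absurd (hC n) (not_le.2 hn)

/-- The inclusion of `b^{s,∞}_r` in `b^{s',∞}_p` cannot be improved by `ε`. -/
lemma exists_saturating (d : ℕ) {p r : ℝ} (s : ℝ) (hp : 1 ≤ p) (hr : 1 ≤ r) {ε : ℝ} (hε : 0 < ε) :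
    ∃ g : BSeq d, MemBesov d s r g ∧
      ¬ MemBesov d (s - max ((d : ℝ) / r - (d : ℝ) / p) 0 + ε) p g := by
  rcases le_total ((d : ℝ) / r - (d : ℝ) / p) 0 with h | h
  · refine ⟨fun j _ => (2 : ℝ) ^ (-(s + (d : ℝ) / 2) * (j : ℝ)), ⟨1, fun j => ?_⟩, ?_⟩
    · rw [besovNormAt_flat hr, sub_self, zero_mul, Real.rpow_zero]
    · rintro ⟨C, hC⟩
      refine not_bounded_two_rpow hε ⟨C, fun j => ?_⟩
      have := hC j
      rw [besovNormAt_flat hp, max_eq_right h] at this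
      convert this using 3
      ring
  · refine ⟨fun j k => if k = 0 then (2 : ℝ) ^ (-(s - (d : ℝ) / r + (d : ℝ) / 2) * (j : ℝ)) else 0,
      ⟨1, fun j => ?_⟩, ?_⟩
    · rw [besovNormAt_spike hr, sub_self, zero_mul, Real.rpow_zero]
    · rintro ⟨C, hC⟩
      refine not_bounded_two_rpow hε ⟨C, fun j => ?_⟩
      have := hC j
      rw [besovNormAt_spike hp, max_eq_left h] at this
      convert this using 3
      ring

/-- Membership in another Besov space is a Borel condition. The bound may be taken to be a natural
number, which makes the union over bounds countable. -/
lemma measurableSet_memBesov {d : ℕ} {s s' r p : ℝ} (hr : 1 ≤ r) (hp : 1 ≤ p)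
    [τ : TopologicalSpace (BesovSp d s r)] (hτ : IsBesovTopology d s r τ) :
    MeasurableSet[borel _] {c : BesovSp d s r | MemBesov d s' p c.1} := by
  borelize (BesovSp d s r)
  have h : {c : BesovSp d s r | MemBesov d s' p c.1}
      = ⋃ n : ℕ, ⋂ j : ℕ, {c : BesovSp d s r | besovNormAt d s' p c.1 j ≤ n} := by
    ext c
    simp only [Set.mem_ofPred_eq, Set.mem_iUnion, Set.mem_iInter]
    constructor
    · rintro ⟨C, hC⟩
      obtain ⟨n, hn⟩ := exists_nat_ge C
      exact ⟨n, fun j => (hC j).trans hn⟩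
    · rintro ⟨n, hn⟩
      exact ⟨n, hn⟩
  rw [h]
  refine MeasurableSet.iUnion fun n => MeasurableSet.iInter fun j => IsClosed.measurableSet ?_
  exact isClosed_le ((continuous_besovNormAt hp j).comp (continuous_val hr hτ)) continuous_const

/-- For `1 ≤ p < ∞`, `1 ≤ r < ∞`, `s > d/r` and `s' = s − (d/r − d/p)₊`, for every `ε > 0`
the set of elements of `b^{s,∞}_r` belonging to `b^{s'+ε,∞}_p` is Haar-null in `b^{s,∞}_r`. -/
theorem besov_smoother_haarNull (d : ℕ) (hd : 1 ≤ d) (p r s : ℝ) (hp : 1 ≤ p) (hr : 1 ≤ r)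
    (hs : (d : ℝ) / r < s)
    (τ : TopologicalSpace (BesovSp d s r)) (hτ : IsBesovTopology d s r τ)
    (ε : ℝ) (hε : 0 < ε) :
    IsHaarNullBesov d s r τ
      {c : BesovSp d s r |
        MemBesov d (s - max ((d : ℝ) / r - (d : ℝ) / p) 0 + ε) p c.1} := by
  borelize (BesovSp d s r)
  obtain ⟨g, hg, hgn⟩ := exists_saturating d s hp hr hε
  have : T2Space (BesovSp d s r) :=
    T2Space.of_injective_continuous Subtype.val_injective (continuous_val hr hτ)
  let f : ℝ → BesovSp d s r := besovLine hr g hg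
  have hf : Continuous f := continuous_line hr hτ g hg
  have hg0 : g ≠ 0 := by
    rintro rfl
    refine hgn ⟨0, fun j => ?_⟩
    rw [← zero_smul ℝ (0 : BSeq d), besovNormAt_smul hp, abs_zero, zero_mul]
  have hinj : Function.Injective f := fun t₁ t₂ h =>
    smul_left_injective ℝ hg0 (congrArg Subtype.val h)
  have hK : IsCompact (f '' Set.Icc 0 1) := isCompact_Icc.image hf
  have hμK : (volume.restrict (Set.Icc (0 : ℝ) 1)).map f (f '' Set.Icc 0 1)ᶜ = 0 := by
    rw [Measure.map_apply hf.measurable hK.isClosed.measurableSet.compl, Set.preimage_compl,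
      Set.preimage_image_eq _ hinj, Measure.restrict_apply measurableSet_Icc.compl,
      Set.compl_inter_self, measure_empty]
  have hprob : IsProbabilityMeasure (volume.restrict (Set.Icc (0 : ℝ) 1)) :=
    ⟨by rw [Measure.restrict_apply_univ, Real.volume_Icc]; norm_num⟩
  refine ⟨_, subset_rfl, measurableSet_memBesov hr hp hτ,
    (volume.restrict (Set.Icc (0 : ℝ) 1)).map f,
    Measure.isProbabilityMeasure_map hf.measurable.aemeasurable, ⟨_, hK, hμK⟩, fun x => ?_⟩
  set T := {y : BesovSp d s r | ∃ a ∈ {c : BesovSp d s r |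
    MemBesov d (s - max ((d : ℝ) / r - (d : ℝ) / p) 0 + ε) p c.1}, y.1 = x.1 + a.1}
  -- Two points `t₁ • g`, `t₂ • g` of the translate would put `(t₁ - t₂) • g` in the subspace.
  have hsub : (T ∩ f '' Set.Icc 0 1).Subsingleton := by
    rintro _ ⟨⟨a₁, ha₁, h₁⟩, t₁, -, rfl⟩ _ ⟨⟨a₂, ha₂, h₂⟩, t₂, -, rfl⟩
    by_contra hne
    have ht : t₁ - t₂ ≠ 0 := fun h => hne (congrArg f (sub_eq_zero.1 h))
    have hdiff : (t₁ - t₂) • g = a₁.1 + (-1 : ℝ) • a₂.1 := by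
      change t₁ • g = _ at h₁
      change t₂ • g = _ at h₂
      rw [sub_smul, h₁, h₂, neg_one_smul]
      abel
    have hmem := (MemBesov.add hp ha₁ (MemBesov.smul hp ha₂ (-1))).smul hp (t₁ - t₂)⁻¹
    rw [← hdiff, inv_smul_smul₀ ht] at hmem
    exact hgn hmem
  have hzero : (volume.restrict (Set.Icc (0 : ℝ) 1)).map f (T ∩ f '' Set.Icc 0 1) = 0 := by
    rw [Measure.map_apply hf.measurable hsub.measurableSet]
    exact (hsub.preimage hinj).measure_zero _
  refine measure_mono_null (fun y hy => ?_) (measure_union_null hzero hμK)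
  by_cases hyK : y ∈ f '' Set.Icc 0 1
  · exact Or.inl ⟨hy, hyK⟩
  · exact Or.inr hyK
end

section
/- Let d ≥ 1, 1 ≤ p < ∞, 1 ≤ r < ∞ and s > d/r. Set α̃ = 2s/(2s+d) if r > pd/(2s+d), and α̃ = 2(s − d/r + d/p)/(2(s − d/r) + d) otherwise, and let g be the sequence with g_{j,k} = j^{−a} 2^{−(s−d/r+d/2)j} 2^{−(d/r)J} (a = 1 + 3/r, J the irreducibility index of (j,k)). Then for every ε with 0 < ε < 1 − α̃, the sequence g does NOT belong to W((1−α̃−ε)p, p); that is, sup_{λ>0} λ^{(1−α̃−ε)p} Σ_{j≥1} 2^{j(dp/2−d)} #{ k : g_{j,k} > λ } = ∞. In particular, the weak scaling function s̃_g(p) = sup{ α ∈ (0,1) : g ∈ W((1−α)p, p) } satisfies s̃_g(p) ≤ α̃. -/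
/-! The weak quasi-norm is bounded below by testing each scale `j` with a single threshold `λ` of
size `j^{-a} 2^{-βj}` and discarding all the other scales. If at least `2^{νj}` positions `k` at
scale `j` have `g_{j,k} ≥ j^{-a} 2^{-βj}`, then
`‖g‖_{W(w,p)} ≥ c j^{-aw} 2^{j(dp/2 - d + ν - βw)}`, which is unbounded as soon as the exponent
`dp/2 - d + ν - βw` is positive (`wBesovNorm_gSeq_eq_top`). Two choices give the two regimes:

* dense regime: every `k` satisfies `J ≤ j`, so `β = s + d/2` and `ν = d` are admissible;
* sparse regime: `k = 0` has `J = 0`, so `β = s - d/r + d/2` and `ν = 0` are admissible.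

In both cases `w = (1 - α̃ - ε)p` makes the exponent equal to `εpβ > 0`. -/

open MeasureTheory
open scoped ENNReal BigOperators

lemma irredIndex_le (d j : ℕ) (k : Fin d → Fin (2 ^ j)) : irredIndex d j k ≤ j :=
  Nat.find_min' _ fun i => by simp

lemma irredIndex_zero (d j : ℕ) :
    irredIndex d j (fun _ => ⟨0, by positivity⟩) = 0 :=
  Nat.le_zero.mp (Nat.find_min' _ fun i => by simp)

/-- Lower bound for the weak quasi-norm of `g` from the large coefficients of each scale: `β` is
the decay rate of the coefficients that are counted, `2^{νj}` a lower bound on their number. -/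
lemma wBesovNorm_gSeq_eq_top (d : ℕ) (s r p w β ν : ℝ)
    (hcount : ∀ j : ℕ, 1 ≤ j → (2 : ℝ) ^ (ν * j) ≤
      (Nat.card {k : Fin d → Fin (2 ^ j) //
        (2 : ℝ)⁻¹ * ((j : ℝ) ^ (-(1 + 3 / r)) * (2 : ℝ) ^ (-β * (j : ℝ))) < |gSeq d s r j k|} : ℝ))
    (hη : 0 < (d : ℝ) * p / 2 - d + ν - β * w) :
    wBesovNorm d w p (gSeq d s r) = ⊤ := by
  set a : ℝ := 1 + 3 / r with ha
  set η : ℝ := (d : ℝ) * p / 2 - d + ν - β * w with hη_def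
  have hb : 0 < Real.log 2 * η := mul_pos (Real.log_pos (by norm_num)) hη
  have hlim : Filter.Tendsto (fun j : ℕ => (2 : ℝ)⁻¹ ^ w *
      (Real.exp (Real.log 2 * η * (j : ℝ)) / (j : ℝ) ^ (a * w))) Filter.atTop Filter.atTop :=
    ((tendsto_exp_mul_div_rpow_atTop (a * w) _ hb).comp
      tendsto_natCast_atTop_atTop).const_mul_atTop (by positivity)
  have hlim' := ENNReal.tendsto_ofReal_atTop.comp hlim
  refine top_unique (le_of_tendsto hlim' ?_)
  filter_upwards [Filter.eventually_ge_atTop 1] with j hj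
  have hj0 : (0 : ℝ) < j := by exact_mod_cast hj
  set lam : ℝ := (2 : ℝ)⁻¹ * ((j : ℝ) ^ (-a) * (2 : ℝ) ^ (-β * (j : ℝ))) with hlam
  have hlam0 : 0 < lam := by positivity
  refine le_trans ?_ (le_iSup _ (⟨lam, hlam0⟩ : Set.Ioi (0 : ℝ)))
  refine le_trans ?_ (mul_le_mul_right (ENNReal.le_tsum j) _)
  rw [← ENNReal.ofReal_natCast, ← ENNReal.ofReal_mul (by positivity),
    ← ENNReal.ofReal_mul (by positivity)]
  refine ENNReal.ofReal_le_ofReal ?_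
  refine le_trans (le_of_eq ?_) (mul_le_mul_of_nonneg_left
    (mul_le_mul_of_nonneg_left (hcount j hj) (by positivity)) (by positivity))
  have h1 : lam ^ w = (2 : ℝ)⁻¹ ^ w * ((j : ℝ) ^ (-(a * w)) * (2 : ℝ) ^ (-β * j * w)) := by
    rw [hlam, Real.mul_rpow (by positivity) (by positivity),
      Real.mul_rpow (by positivity) (by positivity), ← Real.rpow_mul (by positivity),
      ← Real.rpow_mul (by positivity), neg_mul a w]
  have h2 : Real.exp (Real.log 2 * η * (j : ℝ)) = (2 : ℝ) ^ (-β * j * w) *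
      ((2 : ℝ) ^ (((d : ℝ) * p / 2 - d) * j) * (2 : ℝ) ^ (ν * j)) := by
    rw [← Real.rpow_add (by norm_num), ← Real.rpow_add (by norm_num),
      Real.rpow_def_of_pos (by norm_num), hη_def]
    ring_nf
  simp only [h1, h2, Real.rpow_neg hj0.le]
  ring

/-- Dense regime: all the `2^{dj}` coefficients of scale `j` are at least `j^{-a} 2^{-(s+d/2)j}`. -/
lemma card_dense (d : ℕ) (s r : ℝ) (hr : 1 ≤ r) (j : ℕ) (hj : 1 ≤ j) :
    (2 : ℝ) ^ ((d : ℝ) * j) ≤ (Nat.card {k : Fin d → Fin (2 ^ j) //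
      (2 : ℝ)⁻¹ * ((j : ℝ) ^ (-(1 + 3 / r)) * (2 : ℝ) ^ (-(s + d / 2) * (j : ℝ))) <
        |gSeq d s r j k|} : ℝ) := by
  have hj0 : (0 : ℝ) < j := by exact_mod_cast hj
  have hall : ∀ k : Fin d → Fin (2 ^ j),
      (2 : ℝ)⁻¹ * ((j : ℝ) ^ (-(1 + 3 / r)) * (2 : ℝ) ^ (-(s + d / 2) * (j : ℝ))) <
        |gSeq d s r j k| := by
    intro k
    refine lt_of_lt_of_le ?_ (le_abs_self _)
    rw [gSeq, if_neg (by omega), mul_assoc, ← Real.rpow_add (by norm_num)]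
    refine lt_of_lt_of_le (mul_lt_of_lt_one_left (by positivity) (by norm_num)) ?_
    refine mul_le_mul_of_nonneg_left ?_ (by positivity)
    refine Real.rpow_le_rpow_of_exponent_le (by norm_num) ?_
    have h1 : (irredIndex d j k : ℝ) ≤ j := by exact_mod_cast irredIndex_le d j k
    have h2 : 0 ≤ (d : ℝ) / r := by positivity
    nlinarith [mul_le_mul_of_nonneg_left h1 h2]
  rw [Nat.card_congr (Equiv.subtypeUnivEquiv hall)]
  simp only [Nat.card_eq_fintype_card, Fintype.card_pi, Fintype.card_fin, Finset.prod_const,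
    Finset.card_univ]
  rw [← pow_mul, mul_comm j d]
  push_cast
  rw [← Real.rpow_natCast]
  push_cast
  exact le_rfl

/-- Sparse regime: the single coefficient at `k = 0` equals `j^{-a} 2^{-(s-d/r+d/2)j}`. -/
lemma card_sparse (d : ℕ) (s r : ℝ) (j : ℕ) (hj : 1 ≤ j) :
    (2 : ℝ) ^ ((0 : ℝ) * j) ≤ (Nat.card {k : Fin d → Fin (2 ^ j) //
      (2 : ℝ)⁻¹ * ((j : ℝ) ^ (-(1 + 3 / r)) * (2 : ℝ) ^ (-(s - d / r + d / 2) * (j : ℝ))) <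
        |gSeq d s r j k|} : ℝ) := by
  have hj0 : (0 : ℝ) < j := by exact_mod_cast hj
  have hmem : (2 : ℝ)⁻¹ *
      ((j : ℝ) ^ (-(1 + 3 / r)) * (2 : ℝ) ^ (-(s - d / r + d / 2) * (j : ℝ))) <
        |gSeq d s r j (fun _ => ⟨0, by positivity⟩)| := by
    refine lt_of_lt_of_le ?_ (le_abs_self _)
    rw [gSeq, if_neg (by omega), irredIndex_zero, Nat.cast_zero, mul_zero, Real.rpow_zero, mul_one]
    exact mul_lt_of_lt_one_left (by positivity) (by norm_num)
  rw [zero_mul, Real.rpow_zero]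
  have : 0 < Nat.card {k : Fin d → Fin (2 ^ j) //
      (2 : ℝ)⁻¹ * ((j : ℝ) ^ (-(1 + 3 / r)) * (2 : ℝ) ^ (-(s - d / r + d / 2) * (j : ℝ))) <
        |gSeq d s r j k|} := Nat.card_pos_iff.mpr ⟨⟨⟨_, hmem⟩⟩, inferInstance⟩
  exact_mod_cast this

/-- The sequence `g` does not belong to `W((1−α̃−ε)p, p)` for any `0 < ε < 1 − α̃`; in
particular its weak scaling function satisfies `s̃_g(p) ≤ α̃`. -/
theorem gSeq_not_memWBesov (d : ℕ) (hd : 1 ≤ d) (p r s : ℝ)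
    (hp : 1 ≤ p) (hr : 1 ≤ r) (hs : (d : ℝ) / r < s) :
    (∀ ε : ℝ, 0 < ε → ε < 1 - alphaTilde d s r p →
      wBesovNorm d ((1 - alphaTilde d s r p - ε) * p) p (gSeq d s r) = ⊤) ∧
    sSup {α : ℝ | α ∈ Set.Ioo (0 : ℝ) 1 ∧ MemWBesov d ((1 - α) * p) p (gSeq d s r)}
      ≤ alphaTilde d s r p := by
  have hd0 : (0 : ℝ) < d := by exact_mod_cast hd
  have hr0 : 0 < r := by linarith
  have hp0 : 0 < p := by linarith
  have hdr : 0 < (d : ℝ) / r := by positivity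
  have hσ : 0 < s - (d : ℝ) / r := by linarith
  have hs0 : 0 < s := by linarith
  have key : ∀ ε : ℝ, 0 < ε → ε < 1 - alphaTilde d s r p →
      wBesovNorm d ((1 - alphaTilde d s r p - ε) * p) p (gSeq d s r) = ⊤ := by
    intro ε hε _
    by_cases h : p * (d : ℝ) / (2 * s + (d : ℝ)) < r
    · refine wBesovNorm_gSeq_eq_top d s r p _ (s + d / 2) d (card_dense d s r hr) ?_
      have h0 : 2 * s + (d : ℝ) ≠ 0 := by positivity
      have : (d : ℝ) * p / 2 - d + d - (s + d / 2) * ((1 - alphaTilde d s r p - ε) * p)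
          = ε * p * (s + d / 2) := by
        rw [alphaTilde, if_pos h]
        field_simp
        ring
      rw [this]
      positivity
    · refine wBesovNorm_gSeq_eq_top d s r p _ (s - d / r + d / 2) 0 (card_sparse d s r) ?_
      have : (d : ℝ) * p / 2 - d + 0 -
          (s - d / r + d / 2) * ((1 - alphaTilde d s r p - ε) * p)
          = ε * p * (s - d / r + d / 2) := by
        rw [alphaTilde, if_neg h]
        generalize s - (d : ℝ) / r = σ at hσ ⊢
        have h0 : 2 * σ + (d : ℝ) ≠ 0 := by positivity
        field_simp
        ring
      rw [this]
      positivity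
  refine ⟨key, Real.sSup_le ?_ ?_⟩
  · rintro α ⟨⟨_, hα1⟩, hα⟩
    by_contra! hlt
    refine hα ?_
    have := key (α - alphaTilde d s r p) (by linarith) (by linarith)
    rwa [show 1 - alphaTilde d s r p - (α - alphaTilde d s r p) = 1 - α by ring] at this
  -- nonnegativity of `α̃` covers the case of an empty set, whose `sSup` is `0`
  · rw [alphaTilde]
    split_ifs <;> positivity
end
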